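/- Let n = 2m, let E₁, …, E_{2^m+1} be a spread of F₂ⁿ, let D be a set of 2^{m-1} of the indices, and let a ∈ F₂ⁿ. Define the partial spread function f : F₂ⁿ → {-1,1} by f(x) = -1 if x ⊕ a ∈ E_i \ {0} for some i ∈ D, and f(x) = 1 otherwise. Then the Fourier transform of f is given by: f̂(0ⁿ) = 2^{-m}, and for y ≠ 0ⁿ, f̂(y) = -(-1)^{⟨a,y⟩}·2^{-m} if y ∈ E_i^⊥ for some i ∈ D, and f̂(y) = (-1)^{⟨a,y⟩}·2^{-m} otherwise. In particular |f̂(y)| = 2^{-m} for all y, so f is a bent Boolean function. -/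

import Mathlib

/-- The standard bilinear form `⟨x,y⟩ = ∑ i, x i * y i` over `F₂`. -/
def innerF2 {n : ℕ} (x y : Fin n → ZMod 2) : ZMod 2 := ∑ i, x i * y i

/-- The character `(-1)^⟨x,y⟩` as a real number. -/
noncomputable def chiF2 {n : ℕ} (x y : Fin n → ZMod 2) : ℝ :=
  (-1 : ℝ) ^ (innerF2 x y).val

/-- The Fourier transform `f̂(y) = 2^{-n} ∑_x f(x) (-1)^{⟨x,y⟩}`. -/
noncomputable def fourierF2 {n : ℕ} (f : (Fin n → ZMod 2) → ℝ) (y : Fin n → ZMod 2) : ℝ :=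
  ((2 : ℝ) ^ n)⁻¹ * ∑ x, f x * chiF2 x y

/-- Orthogonal complement of a subspace of `F₂ⁿ` with respect to the standard
bilinear form. -/
def perpF2 {n : ℕ} (E : Submodule (ZMod 2) (Fin n → ZMod 2)) :
    Submodule (ZMod 2) (Fin n → ZMod 2) where
  carrier := {y | ∀ x ∈ E, ∑ i, x i * y i = 0}
  zero_mem' := by intro x hx; simp
  add_mem' := by
    intro y z hy hz x hx
    simp only [Pi.add_apply, mul_add, Finset.sum_add_distrib, hy x hx, hz x hx, add_zero]
  smul_mem' := by
    intro c y hy x hx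
    simp only [Pi.smul_apply, smul_eq_mul, mul_left_comm, ← Finset.mul_sum, hy x hx, mul_zero]

/-!
The subspaces `E i`, `i ∈ D`, meet pairwise only in `0`, so up to the translation by `a` the function
`f` is `1 - 2 ∑_{i ∈ D} (1_{E i} - 1_{0})`. The Fourier transform sends the indicator of a subspace
to a multiple of the indicator of its orthogonal complement. As `dim E i = m = n / 2`, the
complements `(E i)^⊥` again meet pairwise only in `0`, and for `|D| = 2^{m-1}` the transform of the
expression above is `2^{-m}` times the same expression for the `(E i)^⊥`. The translation
contributes the factor `(-1)^⟨a,y⟩`.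
-/

section Character

variable {n : ℕ}

lemma neg_one_pow_val_add {R : Type*} [Monoid R] [HasDistribNeg R] (u v : ZMod 2) :
    (-1 : R) ^ (u + v).val = (-1) ^ u.val * (-1) ^ v.val := by
  rw [ZMod.val_add, ← pow_eq_pow_mod _ neg_one_sq, pow_add]

lemma innerF2_add_left (x z y : Fin n → ZMod 2) :
    innerF2 (x + z) y = innerF2 x y + innerF2 z y :=
  add_dotProduct x z y

lemma chiF2_add_left (x z y : Fin n → ZMod 2) : chiF2 (x + z) y = chiF2 x y * chiF2 z y := by
  rw [chiF2, innerF2_add_left, neg_one_pow_val_add, chiF2, chiF2]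

lemma chiF2_zero_left (y : Fin n → ZMod 2) : chiF2 0 y = 1 := by
  simp [chiF2, innerF2]

lemma chiF2_zero_right (x : Fin n → ZMod 2) : chiF2 x 0 = 1 := by
  simp [chiF2, innerF2]

lemma abs_chiF2 (x y : Fin n → ZMod 2) : |chiF2 x y| = 1 := by
  simp [chiF2]

lemma chiF2_eq_one_iff (x y : Fin n → ZMod 2) : chiF2 x y = 1 ↔ innerF2 x y = 0 := by
  have parity : ∀ u : ZMod 2, Even u.val ↔ u = 0 := by decide
  rw [chiF2, neg_one_pow_eq_one_iff_even (by norm_num), parity]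

/-- The map `x ↦ (-1)^⟨x,y⟩` as a character of `F₂ⁿ`, so that the orthogonality relations for
characters of finite groups apply to it. -/
noncomputable def addCharF2 (y : Fin n → ZMod 2) : AddChar (Fin n → ZMod 2) ℝ where
  toFun x := chiF2 x y
  map_zero_eq_one' := chiF2_zero_left y
  map_add_eq_mul' x z := chiF2_add_left x z y

end Character

section Perp

variable {n : ℕ}

lemma mem_perpF2_iff_forall_chiF2 {E : Submodule (ZMod 2) (Fin n → ZMod 2)}
    {y : Fin n → ZMod 2} : y ∈ perpF2 E ↔ ∀ x ∈ E, chiF2 x y = 1 :=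
  forall₂_congr fun x _ => (chiF2_eq_one_iff x y).symm

lemma perpF2_top : perpF2 (⊤ : Submodule (ZMod 2) (Fin n → ZMod 2)) = ⊥ :=
  eq_bot_iff.2 fun y hy => dotProduct_eq_zero y fun x => (dotProduct_comm y x).trans (hy x trivial)

lemma perpF2_bot : perpF2 (⊥ : Submodule (ZMod 2) (Fin n → ZMod 2)) = ⊤ :=
  eq_top_iff.2 fun y _ x hx => by simp [(Submodule.mem_bot _).1 hx]

lemma perpF2_sup (E F : Submodule (ZMod 2) (Fin n → ZMod 2)) :
    perpF2 (E ⊔ F) = perpF2 E ⊓ perpF2 F := by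
  ext y
  refine ⟨fun hy => ⟨fun x hx => hy x (Submodule.mem_sup_left hx),
    fun x hx => hy x (Submodule.mem_sup_right hx)⟩, fun ⟨hyE, hyF⟩ x hx => ?_⟩
  obtain ⟨u, hu, v, hv, rfl⟩ := Submodule.mem_sup.1 hx
  exact (innerF2_add_left u v y).trans (by rw [innerF2, hyE u hu, innerF2, hyF v hv, add_zero])

lemma disjoint_perpF2_of_codisjoint {E F : Submodule (ZMod 2) (Fin n → ZMod 2)}
    (h : Codisjoint E F) : Disjoint (perpF2 E) (perpF2 F) := by
  rw [disjoint_iff, ← perpF2_sup, h.eq_top, perpF2_top]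

lemma pairwiseDisjoint_perpF2 {ι : Type*} {E : ι → Submodule (ZMod 2) (Fin n → ZMod 2)}
    {s : Set ι} (hdim : ∀ i ∈ s, n ≤ 2 * Module.finrank (ZMod 2) (E i))
    (hE : s.PairwiseDisjoint E) : s.PairwiseDisjoint fun i => perpF2 (E i) := by
  intro i hi j hj hij
  have hn : Module.finrank (ZMod 2) (Fin n → ZMod 2) ≤
      Module.finrank (ZMod 2) (E i) + Module.finrank (ZMod 2) (E j) := by
    have := hdim i hi
    have := hdim j hj
    rw [Module.finrank_fin_fun]
    lia
  exact disjoint_perpF2_of_codisjoint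
    (codisjoint_iff.2 (Submodule.eq_top_of_disjoint _ _ hn (hE hi hj hij)))

end Perp

section Fourier

variable {n : ℕ}

lemma fourierF2_sub (f g : (Fin n → ZMod 2) → ℝ) (y : Fin n → ZMod 2) :
    fourierF2 (f - g) y = fourierF2 f y - fourierF2 g y := by
  simp only [fourierF2, Pi.sub_apply, sub_mul, Finset.sum_sub_distrib, mul_sub]

lemma fourierF2_smul (c : ℝ) (f : (Fin n → ZMod 2) → ℝ) (y : Fin n → ZMod 2) :
    fourierF2 (c • f) y = c * fourierF2 f y := by
  rw [fourierF2, fourierF2, mul_left_comm, Finset.mul_sum _ _ c]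
  simp only [Pi.smul_apply, smul_eq_mul, mul_assoc]

lemma fourierF2_sum {ι : Type*} (s : Finset ι) (f : ι → (Fin n → ZMod 2) → ℝ)
    (y : Fin n → ZMod 2) : fourierF2 (∑ i ∈ s, f i) y = ∑ i ∈ s, fourierF2 (f i) y := by
  simp only [fourierF2, Finset.sum_apply, Finset.sum_mul, ← Finset.mul_sum]
  rw [Finset.sum_comm]

lemma fourierF2_comp_add_right (f : (Fin n → ZMod 2) → ℝ) (a y : Fin n → ZMod 2) :
    fourierF2 (fun x => f (x + a)) y = chiF2 a y * fourierF2 f y := by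
  have add_add_self : ∀ x : Fin n → ZMod 2, x + a + a = x := fun x => by
    rw [add_assoc, ZModModule.add_self, add_zero]
  have sum_shift : ∑ x, f (x + a) * chiF2 x y = ∑ x, f x * chiF2 (x + a) y := by
    rw [← Equiv.sum_comp (Equiv.addRight a)]
    simp only [Equiv.coe_addRight, add_add_self]
  simp only [fourierF2, sum_shift, chiF2_add_left, ← mul_assoc, ← Finset.sum_mul]
  ring

lemma sum_chiF2_submodule (E : Submodule (ZMod 2) (Fin n → ZMod 2)) [Fintype E]
    (y : Fin n → ZMod 2) :
    ∑ x : E, chiF2 x y =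
      2 ^ Module.finrank (ZMod 2) E * (perpF2 E : Set (Fin n → ZMod 2)).indicator 1 y := by
  classical
  let ψ : AddChar E ℝ := (addCharF2 y).compAddMonoidHom E.subtype.toAddMonoidHom
  have trivial_iff : ψ = 0 ↔ y ∈ perpF2 E := by
    rw [AddChar.eq_zero_iff, mem_perpF2_iff_forall_chiF2, Subtype.forall]
    rfl
  calc ∑ x : E, chiF2 x y = if ψ = 0 then (Fintype.card E : ℝ) else 0 := ψ.sum_eq_ite
    _ = _ := by
      simp [Set.indicator_apply, trivial_iff, Module.card_eq_pow_finrank (K := ZMod 2) (V := E)]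

lemma fourierF2_indicator_submodule (E : Submodule (ZMod 2) (Fin n → ZMod 2))
    (y : Fin n → ZMod 2) :
    fourierF2 ((E : Set (Fin n → ZMod 2)).indicator 1) y =
      2 ^ Module.finrank (ZMod 2) E / 2 ^ n *
        (perpF2 E : Set (Fin n → ZMod 2)).indicator 1 y := by
  classical
  have sum_eq : ∑ x, (E : Set (Fin n → ZMod 2)).indicator 1 x * chiF2 x y =
      ∑ x : E, chiF2 x y := by
    simp only [Set.indicator_apply, Pi.one_apply, ite_mul, one_mul, zero_mul, SetLike.mem_coe]
    rw [← Finset.sum_filter]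
    exact Finset.sum_subtype _ (by simp) _
  rw [fourierF2, sum_eq, sum_chiF2_submodule]
  ring

lemma fourierF2_one (y : Fin n → ZMod 2) :
    fourierF2 1 y = ({0} : Set (Fin n → ZMod 2)).indicator 1 y := by
  simpa [perpF2_top] using fourierF2_indicator_submodule ⊤ y

lemma fourierF2_indicator_zero (y : Fin n → ZMod 2) :
    fourierF2 (({0} : Set (Fin n → ZMod 2)).indicator 1) y = (2 ^ n)⁻¹ := by
  simpa [perpF2_bot] using fourierF2_indicator_submodule ⊥ y

end Fourier

section PartialSpread

section Module

variable {R V ι : Type*} [Semiring R] [AddCommMonoid V] [Module R V]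

open Classical in
/-- The partial spread function of the subspaces `E i`, `i ∈ D`, without translation: it takes the
value `-1` on the nonzero vectors of their union and `1` elsewhere. -/
noncomputable def partialSpreadFunction (E : ι → Submodule R V) (D : Finset ι) (x : V) : ℝ :=
  if (∃ i ∈ D, x ∈ E i) ∧ x ≠ 0 then -1 else 1

variable {E : ι → Submodule R V} {D : Finset ι}

lemma abs_partialSpreadFunction (x : V) : |partialSpreadFunction E D x| = 1 := by
  unfold partialSpreadFunction
  split_ifs <;> simp

open Classical in
lemma sum_indicator_of_pairwiseDisjoint (hE : (D : Set ι).PairwiseDisjoint E) {x : V}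
    (hx : x ≠ 0) :
    ∑ i ∈ D, (E i : Set V).indicator (1 : V → ℝ) x = if ∃ i ∈ D, x ∈ E i then 1 else 0 := by
  split_ifs with h
  · obtain ⟨i, hi, hxi⟩ := h
    rw [Finset.sum_eq_single_of_mem i hi, Set.indicator_of_mem hxi, Pi.one_apply]
    intro j hj hji
    exact Set.indicator_of_notMem
      (fun hxj => hx (Submodule.disjoint_def.1 (hE hj hi hji) x hxj hxi)) _
  · exact Finset.sum_eq_zero fun i hi => Set.indicator_of_notMem (fun hxi => h ⟨i, hi, hxi⟩) _

lemma partialSpreadFunction_eq_one_sub_sum_indicator (hE : (D : Set ι).PairwiseDisjoint E) :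
    partialSpreadFunction E D =
      1 - (2 : ℝ) • ∑ i ∈ D, ((E i : Set V).indicator 1 - ({0} : Set V).indicator 1) := by
  ext x
  by_cases hx : x = 0
  · simp [partialSpreadFunction, hx]
  · simp only [partialSpreadFunction, Pi.sub_apply, Pi.smul_apply, Pi.one_apply, Finset.sum_apply,
      Set.indicator_of_notMem (Set.mem_singleton_iff.not.2 hx), sub_zero, smul_eq_mul,
      sum_indicator_of_pairwiseDisjoint hE hx]
    by_cases h : ∃ i ∈ D, x ∈ E i
    · rw [if_pos ⟨h, hx⟩, if_pos h]
      norm_num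
    · rw [if_neg fun h' => h h'.1, if_neg h]
      norm_num

end Module

variable {ι : Type*} {D : Finset ι}

lemma fourierF2_partialSpreadFunction {n : ℕ} {E : ι → Submodule (ZMod 2) (Fin n → ZMod 2)}
    (hE : (D : Set ι).PairwiseDisjoint E) (y : Fin n → ZMod 2) :
    fourierF2 (partialSpreadFunction E D) y =
      ({0} : Set (Fin n → ZMod 2)).indicator 1 y -
        2 * ∑ i ∈ D, (2 ^ Module.finrank (ZMod 2) (E i) / 2 ^ n *
          (perpF2 (E i) : Set (Fin n → ZMod 2)).indicator 1 y - (2 ^ n)⁻¹) := by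
  rw [partialSpreadFunction_eq_one_sub_sum_indicator hE, fourierF2_sub, fourierF2_smul,
    fourierF2_sum]
  simp only [fourierF2_sub, fourierF2_one, fourierF2_indicator_submodule, fourierF2_indicator_zero]

theorem fourierF2_partialSpreadFunction_eq_perpF2 {m : ℕ}
    {E : ι → Submodule (ZMod 2) (Fin (2 * m) → ZMod 2)}
    (hdim : ∀ i ∈ D, Module.finrank (ZMod 2) (E i) = m)
    (hE : (D : Set ι).PairwiseDisjoint E) (hD : D.card = 2 ^ (m - 1))
    (y : Fin (2 * m) → ZMod 2) :
    fourierF2 (partialSpreadFunction E D) y =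
      (2 ^ m)⁻¹ * partialSpreadFunction (fun i => perpF2 (E i)) D y := by
  have hperp : (D : Set ι).PairwiseDisjoint fun i => perpF2 (E i) :=
    pairwiseDisjoint_perpF2 (fun i hi => (congrArg (2 * ·) (hdim i hi)).ge) hE
  let δ : ℝ := ({0} : Set (Fin (2 * m) → ZMod 2)).indicator 1 y
  let N : ℝ := ∑ i ∈ D, (perpF2 (E i) : Set (Fin (2 * m) → ZMod 2)).indicator 1 y
  have fourier_eq : fourierF2 (partialSpreadFunction E D) y =
      δ - 2 * (2 ^ m / 2 ^ (2 * m) * N - D.card * (2 ^ (2 * m))⁻¹) := by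
    rw [fourierF2_partialSpreadFunction hE, Finset.sum_sub_distrib,
      Finset.sum_congr rfl fun i hi => by rw [hdim i hi], ← Finset.mul_sum, Finset.sum_const,
      nsmul_eq_mul]
  have perp_eq : partialSpreadFunction (fun i => perpF2 (E i)) D y = 1 - 2 * (N - D.card * δ) := by
    simp [partialSpreadFunction_eq_one_sub_sum_indicator hperp, δ, N]
  -- The two sides differ by a multiple of this product; its second factor covers `m = 0`, where
  -- `2 ^ (m - 1)` is not half of `2 ^ m`.
  have card_eq : (2 ^ m - 2 * (D.card : ℝ)) * (δ - (2 ^ m)⁻¹) = 0 := by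
    rcases m with _ | k
    · simp [δ, show y = 0 from funext fun i => i.elim0]
    · simp [hD, pow_succ']
  rw [fourier_eq, perp_eq, two_mul m, pow_add]
  field_simp at card_eq ⊢
  linear_combination card_eq

end PartialSpread

theorem partial_spread_function_is_bent_general {m : ℕ} {ι : Type*}
    {E : ι → Submodule (ZMod 2) (Fin (2 * m) → ZMod 2)} {D : Finset ι}
    (hdim : ∀ i ∈ D, Module.finrank (ZMod 2) (E i) = m)
    (hE : (D : Set ι).PairwiseDisjoint E) (hD : D.card = 2 ^ (m - 1))
    (a : Fin (2 * m) → ZMod 2)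
    (f : (Fin (2 * m) → ZMod 2) → ℝ)
    (hfneg : ∀ x, (∃ i ∈ D, x + a ∈ E i) → x + a ≠ 0 → f x = -1)
    (hfpos : ∀ x, ¬((∃ i ∈ D, x + a ∈ E i) ∧ x + a ≠ 0) → f x = 1) :
    fourierF2 f 0 = ((2 : ℝ) ^ m)⁻¹ ∧
    (∀ y, y ≠ 0 → (∃ i ∈ D, y ∈ perpF2 (E i)) →
      fourierF2 f y = -(-1 : ℝ) ^ (innerF2 a y).val * ((2 : ℝ) ^ m)⁻¹) ∧
    (∀ y, y ≠ 0 → ¬(∃ i ∈ D, y ∈ perpF2 (E i)) →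
      fourierF2 f y = (-1 : ℝ) ^ (innerF2 a y).val * ((2 : ℝ) ^ m)⁻¹) ∧
    (∀ y, |fourierF2 f y| = ((2 : ℝ) ^ m)⁻¹) := by
  have hf : f = fun x => partialSpreadFunction E D (x + a) := funext fun x => by
    unfold partialSpreadFunction
    split_ifs with hx
    exacts [hfneg x hx.1 hx.2, hfpos x hx]
  have fourier_eq : ∀ y, fourierF2 f y =
      chiF2 a y * ((2 ^ m)⁻¹ * partialSpreadFunction (fun i => perpF2 (E i)) D y) := fun y => by
    rw [hf, fourierF2_comp_add_right, fourierF2_partialSpreadFunction_eq_perpF2 hdim hE hD]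
  refine ⟨?_, fun y hy hyD => ?_, fun y _ hyD => ?_, fun y => ?_⟩
  · simp [fourier_eq, chiF2_zero_right, partialSpreadFunction]
  · rw [fourier_eq, partialSpreadFunction, if_pos ⟨hyD, hy⟩, chiF2]
    ring
  · rw [fourier_eq, partialSpreadFunction, if_neg fun h => hyD h.1, chiF2]
    ring
  · rw [fourier_eq, abs_mul, abs_mul, abs_chiF2, abs_partialSpreadFunction]
    simp

theorem partial_spread_function_is_bent {m : ℕ}
    (E : Fin (2 ^ m + 1) → Submodule (ZMod 2) (Fin (2 * m) → ZMod 2))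
    (hdim : ∀ i, Module.finrank (ZMod 2) (E i) = m)
    (hint : ∀ i j, i ≠ j → E i ⊓ E j = ⊥)
    (D : Finset (Fin (2 ^ m + 1))) (hD : D.card = 2 ^ (m - 1))
    (a : Fin (2 * m) → ZMod 2)
    (f : (Fin (2 * m) → ZMod 2) → ℝ)
    (hfneg : ∀ x, (∃ i ∈ D, x + a ∈ E i) → x + a ≠ 0 → f x = -1)
    (hfpos : ∀ x, ¬((∃ i ∈ D, x + a ∈ E i) ∧ x + a ≠ 0) → f x = 1) :
    fourierF2 f 0 = ((2 : ℝ) ^ m)⁻¹ ∧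
    (∀ y, y ≠ 0 → (∃ i ∈ D, y ∈ perpF2 (E i)) →
      fourierF2 f y = -(-1 : ℝ) ^ (innerF2 a y).val * ((2 : ℝ) ^ m)⁻¹) ∧
    (∀ y, y ≠ 0 → ¬(∃ i ∈ D, y ∈ perpF2 (E i)) →
      fourierF2 f y = (-1 : ℝ) ^ (innerF2 a y).val * ((2 : ℝ) ^ m)⁻¹) ∧
    (∀ y, |fourierF2 f y| = ((2 : ℝ) ^ m)⁻¹) :=
  partial_spread_function_is_bent_general (fun i _ => hdim i)
    (fun i _ j _ hij => disjoint_iff.2 (hint i j hij)) hD a f hfneg hfpos
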